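/- Let A be a unital algebra over a commutative ℚ-algebra k with k → A split. Then i² = 0 and d∘i + i∘d = 0, where i : DR^•A → Ω^{•−1}A is the contraction map defined by i(a₀ da₁⋯da_n)_♮ = Σ_{ℓ=1}^n (−1)^{(ℓ−1)(n−1)+1}[a_ℓ, da_{ℓ+1}⋯da_n a₀ da₁⋯da_{ℓ−1}] and d is the Karoubi-de Rham differential. -/

import Mathlib

/-- evaluation of a word -/
def evW {A Ω : Type} [Ring Ω] (f g : A → Ω) : List (A ⊕ A) → Ω
  | [] => 1
  | Sum.inl a :: w => f a * evW f g w
  | Sum.inr a :: w => g a * evW f g w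

/-- cyclic contraction of a word -/
def PP {A Ω : Type} [Ring Ω] (f g : A → Ω) (s : ℤ) : List (A ⊕ A) → Ω → Ω
  | [], _ => 0
  | Sum.inl a :: w, y => PP f g s w (y * f a)
  | Sum.inr a :: w, y => - (f a * (evW f g w * y) - (evW f g w * y) * f a)
      + s • PP f g s w (y * g a)

/-- degree of a word -/
def dgW {A : Type} : List (A ⊕ A) → ℕ
  | [] => 0
  | Sum.inl _ :: w => dgW w
  | Sum.inr _ :: w => dgW w + 1

theorem evW_append {A Ω : Type} [Ring Ω] (f g : A → Ω) (u v : List (A ⊕ A)) :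
    evW f g (u ++ v) = evW f g u * evW f g v := by
  induction u with
  | nil => simp [evW]
  | cons x u ih => cases x <;> simp [evW, ih, mul_assoc]

theorem PP_add {A Ω : Type} [Ring Ω] (f g : A → Ω) (s : ℤ) (w : List (A ⊕ A)) (x y : Ω) :
    PP f g s w (x + y) = PP f g s w x + PP f g s w y := by
  induction w generalizing x y with
  | nil => simp [PP]
  | cons a w ih =>
    cases a with
    | inl a => simp [PP, add_mul, ih]
    | inr a => simp only [PP, add_mul, ih, mul_add, smul_add]; abel

theorem PP_append {A Ω : Type} [Ring Ω] (f g : A → Ω) (s : ℤ) (u v : List (A ⊕ A)) (y : Ω) :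
    PP f g s (u ++ v) y = PP f g s u (evW f g v * y) + s ^ dgW u • PP f g s v (y * evW f g u) := by
  induction u generalizing y with
  | nil => simp [PP, evW, dgW]
  | cons a w ih =>
    cases a with
    | inl a => simp [PP, evW, dgW, ih, mul_assoc]
    | inr a =>
      simp only [PP, evW, dgW, List.cons_append, ih, mul_assoc, evW_append, smul_add, smul_smul,
        pow_succ']
      abel

theorem PP_rel {A Ω : Type} [Ring A] [Ring Ω] (f g : A → Ω) (s : ℤ)
    (hf : ∀ a b, f (a * b) = f a * f b) (hg : ∀ a b, g (a * b) = g a * f b + f a * g b)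
    (u r : List (A ⊕ A)) (a b : A) (y : Ω) :
    PP f g s (u ++ Sum.inr b :: Sum.inl a :: r) y + PP f g s (u ++ Sum.inl b :: Sum.inr a :: r) y
      = PP f g s (u ++ Sum.inr (b * a) :: r) y := by
  simp only [PP_append, PP, evW, hf, hg, mul_add, add_mul, PP_add, smul_add, smul_sub, smul_neg,
    mul_assoc]
  abel

theorem evW_inr {A Ω : Type} [Ring Ω] (f g : A → Ω) (l : List A) :
    evW f g (l.map Sum.inr) = (l.map g).prod := by
  induction l with
  | nil => simp [evW]
  | cons a l ih => simp [evW, ih]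

theorem PP_sum {A Ω : Type} [Ring Ω] (f g : A → Ω) (s : ℤ) (n : ℕ) (a : ℕ → A) (y : Ω) :
    PP f g s ((List.ofFn fun i : Fin n => a i.1).map Sum.inr) y =
      ∑ l ∈ Finset.range n, (- s ^ l) •
        (f (a l) * ((List.ofFn fun i : Fin (n - (l + 1)) => g (a (l + 1 + i.1))).prod * y *
            (List.ofFn fun i : Fin l => g (a i.1)).prod)
          - ((List.ofFn fun i : Fin (n - (l + 1)) => g (a (l + 1 + i.1))).prod * y *
            (List.ofFn fun i : Fin l => g (a i.1)).prod) * f (a l)) := by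
  induction n generalizing a y with
  | zero => simp [PP]
  | succ n ih =>
    rw [Finset.sum_range_succ', List.ofFn_succ, List.map_cons, PP]
    have := ih (fun i => a (i + 1)) (y * g (a 0))
    simp only [Fin.val_succ] at this ⊢
    simp only [Fin.val_zero]
    rw [this, evW_inr, Finset.smul_sum, add_comm]
    congr 1
    · refine Finset.sum_congr rfl fun l _ => ?_
      rw [smul_smul]
      have e : n + 1 - (l + 1 + 1) = n - (l + 1) := by omega
      rw [e]
      simp only [List.ofFn_succ, Fin.val_succ, Fin.val_zero, List.prod_cons, mul_assoc,
        add_right_comm _ _ 1, pow_succ', mul_neg]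
    · simp [List.map_ofFn, Function.comp_def, add_comm 1]

theorem PP_d {k A Ω : Type} [CommRing k] [Ring A] [Algebra k A] [Ring Ω] [Algebra k Ω]
    (ι : A →ₐ[k] Ω) (d : Ω →ₗ[k] Ω) (G : ℕ → Submodule k Ω)
    (hι : ∀ a, ι a ∈ G 0)
    (hGmul : ∀ m n : ℕ, ∀ x ∈ G m, ∀ y ∈ G n, x * y ∈ G (m + n))
    (hdG : ∀ n : ℕ, ∀ x ∈ G n, d x ∈ G (n + 1))
    (hdd : ∀ x : Ω, d (d x) = 0)
    (hleib : ∀ (m : ℕ) (x : Ω), x ∈ G m → ∀ y : Ω,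
      d (x * y) = d x * y + ((-1 : ℤ) ^ m) • (x * d y))
    (l : List A) :
    (evW ι (fun a => d (ι a)) (l.map Sum.inr) ∈ G l.length ∧
      d (evW ι (fun a => d (ι a)) (l.map Sum.inr)) = 0) ∧
    ∀ (q : ℕ) (y : Ω), y ∈ G q → ∀ s : ℤ, s = - (-1) ^ (q + l.length) →
    d (PP ι (fun a => d (ι a)) s (l.map Sum.inr) y) =
      - (evW ι (fun a => d (ι a)) (l.map Sum.inr) * y)
      + s ^ l.length • (y * evW ι (fun a => d (ι a)) (l.map Sum.inr))
      + (- (-1) ^ l.length : ℤ) • PP ι (fun a => d (ι a)) (-s) (l.map Sum.inr) (d y) := by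
  have hd1 : d 1 = 0 := by
    have := hleib 0 1 (by simpa using hι 1) 1
    simpa using this
  induction l with
  | nil => 
    refine ⟨⟨by simpa [evW] using hι 1, by simp [evW, hd1]⟩, ?_⟩
    intro q y _ s _
    simp [PP, evW]
  | cons a l ih =>
    obtain ⟨⟨h1, h2⟩, h3⟩ := ih
    have hda : d (ι a) ∈ G 1 := by simpa using hdG 0 _ (hι a)
    refine ⟨⟨?_, ?_⟩, ?_⟩
    · have := hGmul _ _ _ hda _ h1
      simpa [evW, add_comm] using this
    · simp [evW, hleib 1 _ hda, h2, hdd]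
    intro q y hy s hs
    set W := evW ι (fun a => d (ι a)) (l.map Sum.inr) with hW
    have e1 : d (W * y) = ((-1 : ℤ) ^ l.length) • (W * d y) := by
      rw [hleib _ _ h1, h2]; simp
    have e2 : d (ι a * (W * y)) = d (ι a) * (W * y) + ι a * d (W * y) := by
      rw [hleib 0 _ (hι a)]; simp
    have hs' : s = (-1) ^ (l.length + q) := by
      rw [hs, List.length_cons, ← add_assoc, pow_succ, add_comm q]; ring
    have e3 : d (W * y * ι a) = d (W * y) * ι a + s • (W * y * d (ι a)) := by
      rw [hleib _ _ (hGmul _ _ _ h1 _ hy), hs']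
    have e4 := h3 (q + 1) (y * d (ι a)) (hGmul _ _ _ hy _ hda) s
      (by rw [hs, List.length_cons]; ring)
    have e5 : d (y * d (ι a)) = d y * d (ι a) := by
      rw [hleib _ _ hy, hdd]; simp
    simp only [List.map_cons, PP, evW, map_add, map_neg, map_sub, map_zsmul, ← hW, e2, e3, e1, e4,
      e5, List.length_cons]
    simp only [mul_smul_comm, smul_mul_assoc, smul_add, smul_sub, smul_neg, smul_smul, mul_assoc,
      pow_succ', neg_smul, neg_mul, mul_neg, neg_neg, one_mul]
    rw [mul_comm s ((-1) ^ l.length)]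
    abel


/-- the contraction map `i` (defined on standard forms by the explicit
formula of [CBEG]) satisfies `i² = 0` and `d∘i + i∘d = 0`, where `d` is the
Karoubi-de Rham differential on the differential envelope `Ω A` (as an identity of
maps `DR A → Ω A`, i.e. as stated on `Ω A` for the formula-defined operator, which
kills commutators). -/
theorem stmt_11 {k A Ω : Type} [CommRing k] [Algebra ℚ k]
    [Ring A] [Algebra k A] [Ring Ω] [Algebra k Ω]
    (ι : A →ₐ[k] Ω) (d : Ω →ₗ[k] Ω) (G : ℕ → Submodule k Ω)
    (hsplit : ∃ p : A →ₗ[k] k, ∀ c : k, p (algebraMap k A c) = c)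
    (hG0 : G 0 = LinearMap.range ι.toLinearMap)
    (hGmul : ∀ m n : ℕ, ∀ x ∈ G m, ∀ y ∈ G n, x * y ∈ G (m + n))
    (hdG : ∀ n : ℕ, ∀ x ∈ G n, d x ∈ G (n + 1))
    (hdd : ∀ x : Ω, d (d x) = 0)
    (hleib : ∀ (m : ℕ) (x : Ω), x ∈ G m → ∀ y : Ω,
      d (x * y) = d x * y + ((-1 : ℤ) ^ m) • (x * d y))
    (hspan : ∀ n : ℕ, G n = Submodule.span k
      {w : Ω | ∃ a : ℕ → A,
        w = ι (a 0) * (List.ofFn fun i : Fin n => d (ι (a (i.1 + 1)))).prod})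
    (hsup : (⨆ n, G n) = ⊤)
    (iOp : Ω →ₗ[k] Ω)
    (hi0 : ∀ a : A, iOp (ι a) = 0)
    (hi : ∀ (n : ℕ) (a : ℕ → A),
      iOp (ι (a 0) * (List.ofFn fun i : Fin n => d (ι (a (i.1 + 1)))).prod)
        = ∑ l ∈ Finset.Icc 1 n, ((-1 : ℤ) ^ ((l - 1) * (n - 1) + 1)) •
            (ι (a l) *
               ((List.ofFn fun i : Fin (n - l) => d (ι (a (l + 1 + i.1)))).prod *
                 ι (a 0) *
                 (List.ofFn fun i : Fin (l - 1) => d (ι (a (1 + i.1)))).prod)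
             - ((List.ofFn fun i : Fin (n - l) => d (ι (a (l + 1 + i.1)))).prod *
                 ι (a 0) *
                 (List.ofFn fun i : Fin (l - 1) => d (ι (a (1 + i.1)))).prod) *
               ι (a l))) :
    (∀ x : Ω, iOp (iOp x) = 0) ∧ (∀ x : Ω, d (iOp x) + iOp (d x) = 0) := by
  classical
  have hι : ∀ a, ι a ∈ G 0 := fun a => by rw [hG0]; exact ⟨a, rfl⟩
  set g : A → Ω := fun a => d (ι a) with hg
  have hgm : ∀ a b, g (a * b) = g a * ι b + ι a * g b := by
    intro a b
    simp only [hg, map_mul]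
    rw [hleib 0 _ (hι a)]; simp
  have ind : ∀ (φ : Ω →ₗ[k] Ω), (∀ (b : A) (l : List A),
      φ (ι b * evW ι g (l.map Sum.inr)) = 0) → ∀ x, φ x = 0 := by
    intro φ h x
    have hx : x ∈ (⨆ n, G n) := by rw [hsup]; trivial
    have hle : (⨆ n, G n) ≤ LinearMap.ker φ := by
      refine iSup_le fun n => ?_
      rw [hspan, Submodule.span_le]
      rintro w ⟨a, rfl⟩
      have := h (a 0) (List.ofFn fun i : Fin n => a (i.1 + 1))
      rw [evW_inr, List.map_ofFn] at this
      exact this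
    exact hle hx
  have hP : ∀ (b : A) (l : List A) (s : ℤ), s = - (-1) ^ l.length →
      iOp (ι b * evW ι g (l.map Sum.inr)) = PP ι g s (l.map Sum.inr) (ι b) := by
    intro b l s hs
    have key := hi l.length (fun i => (b :: l).getD i 0)
    have hl : (List.ofFn fun i : Fin l.length => l.getD i.1 0) = l := by
      apply List.ext_getElem <;> simp
    have key2 := PP_sum ι g s l.length (fun i => l.getD i 0) (ι b)
    rw [hl] at key2
    rw [key2, evW_inr]
    have e : (l.map g).prod = (List.ofFn fun i : Fin l.length =>
        d (ι ((b :: l).getD (i.1 + 1) 0))).prod := by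
      conv_lhs => rw [← hl]
      rw [List.map_ofFn]; rfl
    rw [e]
    refine key.trans ?_
    refine Finset.sum_nbij' (fun x => x - 1) (fun x => x + 1) ?_ ?_ ?_ ?_ ?_
    · intro x hx; simp at hx ⊢; omega
    · intro x hx; simp at hx ⊢; omega
    · intro x hx; simp at hx ⊢; omega
    · intro x hx; simp
    · intro x hx
      obtain ⟨m, rfl⟩ : ∃ m, x = m + 1 := ⟨x - 1, by simp at hx; omega⟩
      have hn : l.length = (l.length - 1) + 1 := by simp at hx; omega
      have hsg : (-1 : ℤ) ^ ((m + 1 - 1) * (l.length - 1) + 1) = - s ^ m := by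
        have : s = (-1) ^ (l.length - 1) := by
          rw [hs]; conv_lhs => rw [hn]
          rw [pow_succ]; ring
        rw [this, ← pow_mul, pow_succ, Nat.add_sub_cancel, mul_comm m]; ring
      rw [hsg]
      have e1 : ∀ i, (b :: l).getD (m + 1 + 1 + i) 0 = l.getD (m + 1 + i) 0 := fun i => by
        rw [show m + 1 + 1 + i = (m + 1 + i) + 1 by omega]; rfl
      have e2 : ∀ i, (b :: l).getD (1 + i) 0 = l.getD i 0 := fun i => by
        rw [add_comm]; rfl
      simp only [e1, e2, Nat.add_sub_cancel]
      rfl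
  have hP2 : ∀ (l : List A) (b a : A) (r : List A) (s : ℤ), s = - (-1) ^ (l.length + r.length) →
      iOp (ι b * evW ι g (l.map Sum.inr ++ Sum.inl a :: r.map Sum.inr)) =
        PP ι g s (l.map Sum.inr ++ Sum.inl a :: r.map Sum.inr) (ι b) := by
    intro l
    induction l using List.reverseRecOn with
    | nil =>
      intro b a r s hs
      have := hP (b * a) r s (by simpa using hs)
      simpa [evW, PP, mul_assoc] using this
    | append_singleton l c ih =>
      intro b a r s hs
      have h1 := ih b c (a :: r) s (by rw [hs]; simp; ring)
      have h2 := hP b (l ++ (c * a) :: r) s (by rw [hs]; simp; ring)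
      have h3 := PP_rel ι g s (map_mul ι) hgm (l.map Sum.inr) (r.map Sum.inr) a c (ι b)
      simp only [List.map_append, List.map_cons, List.map_nil, List.append_assoc,
        List.cons_append, List.nil_append] at h1 h2 ⊢
      rw [eq_sub_of_add_eq h3, ← h1, ← h2, ← map_sub]
      congr 1
      simp only [evW_append, evW, hgm]
      noncomm_ring
  have hcomm : ∀ (a : A) (x : Ω), iOp (ι a * x - x * ι a) = 0 := by
    intro a
    refine ind (iOp ∘ₗ (LinearMap.mulLeft k (ι a) - LinearMap.mulRight k (ι a))) ?_
    intro b l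
    have h1 := hP (a * b) l _ rfl
    have h2 := hP2 l b a [] _ rfl
    simp only [LinearMap.comp_apply, LinearMap.sub_apply, LinearMap.mulLeft_apply,
      LinearMap.mulRight_apply, map_sub]
    simp only [evW_append, PP_append, evW, PP, List.map_nil, List.length_nil, add_zero, mul_one,
      smul_zero] at h2
    rw [mul_assoc, h2, ← mul_assoc, ← map_mul, h1, sub_self]
  have hPP0 : ∀ (s : ℤ) (w : List (A ⊕ A)) (y : Ω), iOp (PP ι g s w y) = 0 := by
    intro s w
    induction w with
    | nil => intro y; simp [PP]
    | cons x w ih =>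
      intro y
      cases x with
      | inl a => exact ih _
      | inr a => rw [PP, map_add, map_neg, hcomm, map_zsmul, ih]; simp
  refine ⟨ind (iOp ∘ₗ iOp) ?_, ind (d ∘ₗ iOp + iOp ∘ₗ d) ?_⟩
  · intro b l
    rw [LinearMap.comp_apply, hP b l _ rfl, hPP0]
  · intro b l
    obtain ⟨⟨-, h2⟩, h3⟩ := PP_d ι d G hι hGmul hdG hdd hleib l
    have h4 := h3 0 (ι b) (hι b) (- (-1) ^ l.length) (by simp)
    have h5 := hP 1 (b :: l) ((-1) ^ l.length) (by simp [pow_succ])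
    have h6 : d (ι b * evW ι g (l.map Sum.inr)) = g b * evW ι g (l.map Sum.inr) := by
      rw [hleib 0 _ (hι b), h2]; simp [hg]
    have hs : (- (-1) ^ l.length : ℤ) ^ l.length = 1 := by
      rcases Nat.even_or_odd l.length with h | h
      · rw [h.neg_one_pow, h.neg_one_pow]
      · rw [h.neg_one_pow]; simp
    simp only [LinearMap.add_apply, LinearMap.comp_apply]
    rw [h6, hP b l _ rfl, h4, hs]
    simp only [List.map_cons, evW, PP, map_one, one_mul, mul_one] at h5
    rw [h5]
    simp only [one_smul, neg_neg, neg_smul, hg]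
    abel
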